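/- Let N ≥ 1 and σ ∈ (0,1), and define f_σ : ℝ^N → ℝ by f_σ(ξ) = (2/π)·∫₀^{‖ξ‖} arctan(τ/σ) dτ. Then f_σ is convex on ℝ^N, continuously differentiable on ℝ^N, f_σ(0) = 0, and for every ξ ∈ ℝ^N one has (1 − √σ)·‖ξ‖ − √σ ≤ f_σ(ξ) ≤ ‖ξ‖ and ‖∇f_σ(ξ)‖ ≤ 1. -/

import Mathlib

/-!
A convex nondecreasing function of the norm is convex, and a primitive of a nondecreasing slope `g`
is convex, so `x ↦ ∫₀^{‖x‖} g` is convex as soon as `0 ≤ g 0`. If moreover `g` is continuous with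
`g 0 = 0`, this function is `C¹`, including at the origin, with gradient `(g ‖x‖ / ‖x‖) x` of norm
`|g ‖x‖|`. The lower bound is the supporting line of the primitive at `√σ`, where the slope
`(2/π) arctan (τ/σ)` is at least `1 - σ / √σ = 1 - √σ`.
-/

open Set intervalIntegral
open scoped Topology

section MonotoneSlope

variable {g : ℝ → ℝ} {a b c : ℝ}

theorem mul_sub_le_integral_of_monotoneOn (hg : MonotoneOn g (uIcc a b)) :
    g a * (b - a) ≤ ∫ t in a..b, g t := by
  rcases le_total a b with hab | hba
  · have hle : ∫ _ in a..b, g a ≤ ∫ t in a..b, g t :=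
      integral_mono_on hab intervalIntegrable_const hg.intervalIntegrable fun t ht =>
        hg left_mem_uIcc (Icc_subset_uIcc ht) ht.1
    simpa [mul_comm] using hle
  · have hle : ∫ t in b..a, g t ≤ ∫ _ in b..a, g a :=
      integral_mono_on hba hg.intervalIntegrable.symm intervalIntegrable_const fun t ht =>
        hg (Icc_subset_uIcc' ht) left_mem_uIcc ht.2
    rw [integral_const, smul_eq_mul] at hle
    rw [integral_symm]
    linarith

theorem supporting_line_le_integral_of_monotoneOn (hg : MonotoneOn g (Ici c)) (ha : c ≤ a)
    (hb : c ≤ b) : (∫ t in c..a, g t) + g a * (b - a) ≤ ∫ t in c..b, g t := by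
  have hmono {u v : ℝ} (hu : c ≤ u) (hv : c ≤ v) : MonotoneOn g (uIcc u v) :=
    hg.mono fun _ ht => (le_min hu hv).trans ht.1
  rw [← integral_add_adjacent_intervals (hmono le_rfl ha).intervalIntegrable
    (hmono ha hb).intervalIntegrable]
  gcongr
  exact mul_sub_le_integral_of_monotoneOn (hmono ha hb)

theorem convexOn_integral_of_monotoneOn (hg : MonotoneOn g (Ici c)) :
    ConvexOn ℝ (Ici c) fun x => ∫ t in c..x, g t := by
  refine ⟨convex_Ici c, fun x hx y hy p q hp hq hpq => ?_⟩
  have hz : p • x + q • y ∈ Ici c := convex_Ici c hx hy hp hq hpq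
  set z := p • x + q • y with hz_def
  have hx_line := mul_le_mul_of_nonneg_left
    (supporting_line_le_integral_of_monotoneOn hg hz hx) hp
  have hy_line := mul_le_mul_of_nonneg_left
    (supporting_line_le_integral_of_monotoneOn hg hz hy) hq
  have hbarycenter : p * (x - z) + q * (y - z) = 0 := by
    simp only [hz_def, smul_eq_mul]
    linear_combination (-(p * x + q * y)) * hpq
  simp only [smul_eq_mul]
  linear_combination hx_line + hy_line - g z * hbarycenter - (∫ t in c..z, g t) * hpq

theorem monotoneOn_integral_of_monotoneOn (hg : MonotoneOn g (Ici c)) (hc : 0 ≤ g c) :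
    MonotoneOn (fun x => ∫ t in c..x, g t) (Ici c) := fun x hx y hy hxy => by
  have hslope : 0 ≤ g x * (y - x) :=
    mul_nonneg (hc.trans (hg self_mem_Ici hx hx)) (sub_nonneg.mpr hxy)
  have hline := supporting_line_le_integral_of_monotoneOn hg hx hy
  dsimp only
  linarith

end MonotoneSlope

theorem convexOn_univ_comp_norm {E : Type*} [SeminormedAddCommGroup E] [NormedSpace ℝ E]
    {F : ℝ → ℝ} (hF : ConvexOn ℝ (Ici 0) F) (hmono : MonotoneOn F (Ici 0)) :
    ConvexOn ℝ univ fun x : E => F ‖x‖ := by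
  have hrange : norm '' (univ : Set E) ⊆ Ici 0 := by
    rintro _ ⟨x, -, rfl⟩
    exact norm_nonneg x
  have hconvex : Convex ℝ (norm '' (univ : Set E)) :=
    (isPreconnected_univ.image _ continuous_norm.continuousOn).convex
  exact (hF.subset hrange hconvex).comp convexOn_univ_norm (hmono.mono hrange)

section NormedSpace

variable {E : Type*} [NormedAddCommGroup E] [NormedSpace ℝ E]

theorem hasFDerivAt_comp_norm_zero {F : ℝ → ℝ} (hF : HasDerivAt F 0 0) :
    HasFDerivAt (fun x : E => F ‖x‖) (0 : E →L[ℝ] ℝ) 0 := by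
  rw [hasDerivAt_iff_isLittleO_nhds_zero] at hF
  rw [hasFDerivAt_iff_isLittleO_nhds_zero]
  simpa [Function.comp_def] using (hF.comp_tendsto (tendsto_norm_zero (E := E))).of_norm_right

theorem norm_div_norm_smul {r : ℝ} {x : E} (hr : x = 0 → r = 0) : ‖(r / ‖x‖) • x‖ = |r| := by
  rcases eq_or_ne x 0 with rfl | hx
  · simp [hr rfl]
  · rw [norm_smul, norm_div, norm_norm, div_mul_cancel₀ _ (norm_ne_zero_iff.mpr hx),
      Real.norm_eq_abs]

theorem continuous_div_norm_smul {g : ℝ → ℝ} (hg : Continuous g) (hg0 : g 0 = 0) :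
    Continuous fun x : E => (g ‖x‖ / ‖x‖) • x := by
  refine continuous_iff_continuousAt.mpr fun x => ?_
  rcases eq_or_ne x 0 with rfl | hx
  · have hnorm : Filter.Tendsto (fun y : E => |g ‖y‖|) (𝓝 0) (𝓝 0) := by
      simpa [hg0] using (hg.comp continuous_norm).abs.tendsto (0 : E)
    rw [ContinuousAt, smul_zero]
    refine squeeze_zero_norm (fun y => (norm_div_norm_smul ?_).le) hnorm
    rintro rfl
    rw [norm_zero, hg0]
  · exact ((hg.comp continuous_norm).continuousAt.div continuous_norm.continuousAt
      (norm_ne_zero_iff.mpr hx)).smul continuousAt_id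

end NormedSpace

section InnerProductSpace

variable {E : Type*} [NormedAddCommGroup E] [InnerProductSpace ℝ E]

theorem hasFDerivAt_norm_of_ne_zero {x : E} (hx : x ≠ 0) :
    HasFDerivAt (fun y : E => ‖y‖) (‖x‖⁻¹ • innerSL ℝ x) x := by
  have hsq : HasFDerivAt (fun y : E => ‖y‖ ^ 2) (2 • innerSL ℝ x) x :=
    (hasStrictFDerivAt_norm_sq x).hasFDerivAt
  have hsqrt := hsq.sqrt (pow_ne_zero 2 (norm_ne_zero_iff.mpr hx))
  simp only [Real.sqrt_sq (norm_nonneg _)] at hsqrt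
  refine hsqrt.congr_fderiv ?_
  rw [← Nat.cast_smul_eq_nsmul ℝ, smul_smul]
  congr 1
  field_simp
  norm_num

-- At `x = 0` the division by zero makes the derivative `0`, which is correct when `F' = 0`.
theorem hasFDerivAt_comp_norm {F : ℝ → ℝ} {F' : ℝ} {x : E} (hF : HasDerivAt F F' ‖x‖)
    (hF' : x = 0 → F' = 0) :
    HasFDerivAt (fun y : E => F ‖y‖) ((F' / ‖x‖) • innerSL ℝ x) x := by
  rcases eq_or_ne x 0 with rfl | hx
  · rw [hF' rfl, norm_zero] at hF
    simpa using hasFDerivAt_comp_norm_zero (E := E) hF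
  · rw [div_eq_mul_inv, mul_smul]
    exact hF.comp_hasFDerivAt x (hasFDerivAt_norm_of_ne_zero hx)

end InnerProductSpace

/-- The radial function `x ↦ ∫₀^{‖x‖} g` with radial slope `g`; the regularizations of the norm
considered here are of this form. -/
noncomputable def radialIntegral {E : Type*} [Norm E] (g : ℝ → ℝ) (x : E) : ℝ :=
  ∫ t in (0 : ℝ)..‖x‖, g t

namespace radialIntegral

section Seminormed

variable {E : Type*} [SeminormedAddCommGroup E] {g : ℝ → ℝ}

theorem map_zero (g : ℝ → ℝ) : radialIntegral g (0 : E) = 0 := by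
  simp [radialIntegral]

theorem convexOn_univ [NormedSpace ℝ E] (hg : MonotoneOn g (Ici 0)) (hg0 : 0 ≤ g 0) :
    ConvexOn ℝ univ (radialIntegral g : E → ℝ) :=
  convexOn_univ_comp_norm (convexOn_integral_of_monotoneOn hg)
    (monotoneOn_integral_of_monotoneOn hg hg0)

theorem mul_norm_sub_le (hg : MonotoneOn g (Ici 0)) (hg0 : 0 ≤ g 0) {a : ℝ} (ha : 0 ≤ a) (x : E) :
    g a * (‖x‖ - a) ≤ radialIntegral g x := by
  have hline := supporting_line_le_integral_of_monotoneOn hg ha (norm_nonneg x)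
  have hnonneg : 0 ≤ ∫ t in (0 : ℝ)..a, g t := by
    simpa using monotoneOn_integral_of_monotoneOn hg hg0 self_mem_Ici ha ha
  exact (le_add_of_nonneg_left hnonneg).trans hline

theorem abs_le_mul_norm {C : ℝ} (hg : ∀ t, 0 < t → |g t| ≤ C) (x : E) :
    |radialIntegral g x| ≤ C * ‖x‖ := by
  have hbound : ∀ t ∈ uIoc 0 ‖x‖, ‖g t‖ ≤ C := fun t ht =>
    hg t (uIoc_of_le (norm_nonneg x) ▸ ht).1
  simpa [radialIntegral] using norm_integral_le_of_norm_le_const hbound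

end Seminormed

section InnerProductSpace

variable {E : Type*} [NormedAddCommGroup E] [InnerProductSpace ℝ E] {g : ℝ → ℝ}

theorem hasFDerivAt (hg : Continuous g) (hg0 : g 0 = 0) (x : E) :
    HasFDerivAt (radialIntegral g) (innerSL ℝ ((g ‖x‖ / ‖x‖) • x)) x := by
  rw [map_smul]
  refine hasFDerivAt_comp_norm (hg.integral_hasStrictDerivAt 0 ‖x‖).hasDerivAt ?_
  rintro rfl
  rw [norm_zero, hg0]

theorem contDiff_one (hg : Continuous g) (hg0 : g 0 = 0) :
    ContDiff ℝ 1 (radialIntegral g : E → ℝ) :=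
  contDiff_one_iff_hasFDerivAt.mpr
    ⟨_, (innerSL ℝ).continuous.comp (continuous_div_norm_smul hg hg0), hasFDerivAt hg hg0⟩

theorem norm_fderiv (hg : Continuous g) (hg0 : g 0 = 0) (x : E) :
    ‖fderiv ℝ (radialIntegral g) x‖ = |g ‖x‖| := by
  rw [(hasFDerivAt hg hg0 x).fderiv, innerSL_apply_norm]
  refine norm_div_norm_smul ?_
  rintro rfl
  rw [norm_zero, hg0]

end InnerProductSpace

end radialIntegral

theorem arctan_le_self_of_nonneg {x : ℝ} (hx : 0 ≤ x) : Real.arctan x ≤ x := by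
  simpa only [Real.tan_arctan] using
    Real.le_tan (Real.arctan_nonneg.mpr hx) (Real.arctan_lt_pi_div_two x)

/-- The radial slope `τ ↦ (2/π) arctan (τ/σ)` of the arctangent-type regularization of the norm
with parameter `σ`, normalized so as to tend to `1` at infinity. -/
noncomputable def arctanSlope (σ t : ℝ) : ℝ :=
  2 / Real.pi * Real.arctan (t / σ)

namespace arctanSlope

theorem map_zero (σ : ℝ) : arctanSlope σ 0 = 0 := by
  simp [arctanSlope]

theorem continuous (σ : ℝ) : Continuous (arctanSlope σ) :=
  continuous_const.mul (Real.continuous_arctan.comp (continuous_id.div_const σ))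

theorem monotone {σ : ℝ} (hσ : 0 ≤ σ) : Monotone (arctanSlope σ) := fun _ _ hst =>
  mul_le_mul_of_nonneg_left (Real.arctan_mono (div_le_div_of_nonneg_right hst hσ)) (by positivity)

theorem abs_le_one (σ t : ℝ) : |arctanSlope σ t| ≤ 1 := by
  have harctan : |Real.arctan (t / σ)| ≤ Real.pi / 2 :=
    abs_le.mpr ⟨(Real.neg_pi_div_two_lt_arctan _).le, (Real.arctan_lt_pi_div_two _).le⟩
  have hpi : 0 < 2 / Real.pi := by positivity
  calc |arctanSlope σ t| = 2 / Real.pi * |Real.arctan (t / σ)| := by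
        rw [arctanSlope, abs_mul, abs_of_pos hpi]
    _ ≤ 2 / Real.pi * (Real.pi / 2) := by gcongr
    _ = 1 := by field_simp

theorem one_sub_div_le {σ t : ℝ} (hσ : 0 < σ) (ht : 0 < t) : 1 - σ / t ≤ arctanSlope σ t := by
  have hpos : 0 < σ / t := div_pos hσ ht
  have hcomplement : arctanSlope σ t = 1 - 2 / Real.pi * Real.arctan (σ / t) := by
    rw [arctanSlope, ← inv_div σ t, Real.arctan_inv_of_pos hpos]
    field_simp
  have hpi : 2 / Real.pi ≤ 1 := (div_le_one Real.pi_pos).mpr Real.two_le_pi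
  have hsmall : 2 / Real.pi * Real.arctan (σ / t) ≤ σ / t :=
    calc 2 / Real.pi * Real.arctan (σ / t) ≤ 1 * (σ / t) :=
          mul_le_mul hpi (arctan_le_self_of_nonneg hpos.le)
            (Real.arctan_nonneg.mpr hpos.le) zero_le_one
      _ = σ / t := one_mul _
  linarith

end arctanSlope

theorem one_sub_sqrt_mul_norm_sub_sqrt_le {E : Type*} [SeminormedAddCommGroup E] {σ : ℝ}
    (hσ : 0 < σ) (x : E) :
    (1 - √σ) * ‖x‖ - √σ ≤ radialIntegral (arctanSlope σ) x := by
  have hsqrt : 0 < √σ := Real.sqrt_pos.mpr hσ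
  have hlower : 1 - √σ ≤ arctanSlope σ √σ := by
    simpa only [Real.div_sqrt] using arctanSlope.one_sub_div_le hσ hsqrt
  have hupper : arctanSlope σ √σ ≤ 1 := (abs_le.mp (arctanSlope.abs_le_one σ _)).2
  calc (1 - √σ) * ‖x‖ - √σ ≤ arctanSlope σ √σ * ‖x‖ - arctanSlope σ √σ * √σ :=
        sub_le_sub (mul_le_mul_of_nonneg_right hlower (norm_nonneg x))
          (mul_le_of_le_one_left hsqrt.le hupper)
    _ = arctanSlope σ √σ * (‖x‖ - √σ) := (mul_sub _ _ _).symm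
    _ ≤ radialIntegral (arctanSlope σ) x :=
        radialIntegral.mul_norm_sub_le ((arctanSlope.monotone hσ.le).monotoneOn _)
          (arctanSlope.map_zero σ).ge hsqrt.le x

theorem stmt5_general {E : Type*} [NormedAddCommGroup E] [InnerProductSpace ℝ E] {σ : ℝ}
    (hσ : 0 < σ) (f : E → ℝ)
    (hf : ∀ ξ : E, f ξ = (2 / Real.pi) * ∫ τ in (0:ℝ)..‖ξ‖, Real.arctan (τ / σ)) :
    ConvexOn ℝ Set.univ f ∧ ContDiff ℝ 1 f ∧ f 0 = 0 ∧
      ∀ ξ : E,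
        ((1 - Real.sqrt σ) * ‖ξ‖ - Real.sqrt σ ≤ f ξ ∧ f ξ ≤ ‖ξ‖) ∧ ‖fderiv ℝ f ξ‖ ≤ 1 := by
  obtain rfl : f = radialIntegral (arctanSlope σ) :=
    funext fun ξ => (hf ξ).trans (integral_const_mul _ _).symm
  have hcont := arctanSlope.continuous σ
  have hzero := arctanSlope.map_zero σ
  have hbound := arctanSlope.abs_le_one σ
  refine ⟨radialIntegral.convexOn_univ ((arctanSlope.monotone hσ.le).monotoneOn _) hzero.ge,
    radialIntegral.contDiff_one hcont hzero, radialIntegral.map_zero _, fun ξ =>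
      ⟨⟨one_sub_sqrt_mul_norm_sub_sqrt_le hσ ξ, ?_⟩, ?_⟩⟩
  · simpa only [one_mul] using
      (le_abs_self _).trans (radialIntegral.abs_le_mul_norm (fun t _ => hbound t) ξ)
  · rw [radialIntegral.norm_fderiv hcont hzero]
    exact hbound ‖ξ‖

/-- Remark 4.2: the arctangent-type regularization
`f_σ ξ = (2/π) ∫₀^{‖ξ‖} arctan (τ/σ) dτ` is a suitable approximation of the Euclidean norm. -/
theorem stmt5 (N : ℕ) (hN : 1 ≤ N) (σ : ℝ) (hσ : σ ∈ Set.Ioo (0:ℝ) 1)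
    (f : EuclideanSpace ℝ (Fin N) → ℝ)
    (hf : ∀ ξ : EuclideanSpace ℝ (Fin N),
      f ξ = (2 / Real.pi) * ∫ τ in (0:ℝ)..‖ξ‖, Real.arctan (τ / σ)) :
    ConvexOn ℝ Set.univ f ∧ ContDiff ℝ 1 f ∧ f 0 = 0 ∧
      ∀ ξ : EuclideanSpace ℝ (Fin N),
        ((1 - Real.sqrt σ) * ‖ξ‖ - Real.sqrt σ ≤ f ξ ∧ f ξ ≤ ‖ξ‖) ∧
          ‖gradient f ξ‖ ≤ 1 := by
  simpa only [gradient, LinearIsometryEquiv.norm_map] using stmt5_general hσ.1 f hf
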